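/- Fix integers ℓ≥1 and n≥0. For every triple (a,b,c) of nonnegative integers, the number of colored permutations σ ∈ G_{ℓ,n} with fmaf σ = a, exc σ = b and fix σ = c equals the number of σ ∈ G_{ℓ,n} with fmaj σ = a, exc σ = b and fix σ = c; that is, the triple statistics (fmaf, exc, fix) and (fmaj, exc, fix) are equidistributed on G_{ℓ,n}. -/

import Mathlib

/-!
Deleting the fixed points of `σ` leaves a derangement `δ` with the same `exc` and `col`. It
therefore suffices to compare `maf` and `maj` over all ways of inserting `k` fixed points into a
given derangement `δ` of length `m`.

An inserted fixed point adds to `maf` the number of letters of `δ` to its left, so the generating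
function of `maf` is `q ^ maj δ * [m + k choose k]_q`. For `maj`, replace every fixed point by one
letter `z`, raise the excedances above `z` and lower the remaining letters below it. This changes no
comparison of neighboring letters, and it turns the insertions into the shuffles of `z ⋯ z` with a
word that avoids `z` and has the same `maj` as `δ`. Splitting off the last letter of a shuffle and
using both `q`-Pascal rules, one finds the same generating function.
-/

open Finset

/-- A colored permutation in `G_{ℓ,n} ≅ C_ℓ ≀ S_n`: an underlying permutation of `Fin n`
together with a color (exponent of `ζ`) attached to each position. The letter at (0-based)
position `i` of the word of `σ` is `ζ^(σ.2 i) · (σ.1 i + 1)` (1-based value `σ.1 i + 1`). -/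
abbrev CP (ℓ n : ℕ) := Equiv.Perm (Fin n) × (Fin n → Fin ℓ)

namespace CP

variable {ℓ n : ℕ}

/-- `gtLetter a b` : the letter `a = (colorIndex, value)` is greater than `b` in the order
`1 > ζ > ⋯ > ζ^{ℓ-1}` on colors, colors compared first. -/
def gtLetter (a b : ℕ × ℕ) : Prop := a.1 < b.1 ∨ (a.1 = b.1 ∧ b.2 < a.2)

instance (a b : ℕ × ℕ) : Decidable (gtLetter a b) := by unfold gtLetter; infer_instance

/-- The letter (color index, 0-based absolute value) at 0-based position `i`. -/
def letter (σ : CP ℓ n) (i : ℕ) : ℕ × ℕ :=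
  if h : i < n then ((σ.2 ⟨i, h⟩ : ℕ), (σ.1 ⟨i, h⟩ : ℕ)) else (0, 0)

/-- 0-based descent positions : `i < n-1` such that `x_{i+1} > x_{i+2}` (1-based positions). -/
def desSet (σ : CP ℓ n) : Finset ℕ :=
  (range (n - 1)).filter fun i => gtLetter (letter σ i) (letter σ (i + 1))

/-- Major index: sum of the (1-based) descent places. -/
def maj (σ : CP ℓ n) : ℕ := ∑ i ∈ desSet σ, (i + 1)

/-- Number of descents. -/
def des (σ : CP ℓ n) : ℕ := (desSet σ).card

/-- `col σ = Σ_j j·#{i : ε_{x_i} = ζ^j}`. -/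
def col (σ : CP ℓ n) : ℕ := ∑ i, (σ.2 i : ℕ)

/-- flag major index. -/
def fmaj (σ : CP ℓ n) : ℕ := ℓ * maj σ + col σ

/-- The set of fixed points (position fixed and color `ζ^0 = 1`). -/
def fixSet (σ : CP ℓ n) : Finset (Fin n) :=
  univ.filter fun i => σ.1 i = i ∧ (σ.2 i : ℕ) = 0

def fix (σ : CP ℓ n) : ℕ := (fixSet σ).card

/-- Number of excedances `x_i > i`. -/
def exc (σ : CP ℓ n) : ℕ :=
  (univ.filter fun i : Fin n => (σ.2 i : ℕ) = 0 ∧ (i : ℕ) < (σ.1 i : ℕ)).card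

lemma card_nonfix (σ : CP ℓ n) : ((fixSet σ)ᶜ).card = n - fix σ := by
  rw [Finset.card_compl, fix, Fintype.card_fin]

lemma card_vals (σ : CP ℓ n) : (((fixSet σ)ᶜ).image σ.1).card = n - fix σ := by
  rw [Finset.card_image_of_injective _ σ.1.injective, card_nonfix]

/-- The bijection from nonfixed positions to the set of their values. -/
def derMid (σ : CP ℓ n) :
    {x // x ∈ ((fixSet σ)ᶜ : Finset (Fin n))} ≃ {x // x ∈ ((fixSet σ)ᶜ).image σ.1} where
  toFun p := ⟨σ.1 p.1, Finset.mem_image_of_mem _ p.2⟩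
  invFun v := ⟨σ.1.symm v.1, by
    obtain ⟨p, hp, hpv⟩ := Finset.mem_image.mp v.2
    simpa [← hpv] using hp⟩
  left_inv p := by simp
  right_inv v := by simp

/-- The derangement part `Der σ`: delete the fixed points of the word of `σ`, replace each
absolute value by its rank among the remaining values, and keep the colors. -/
def Der (σ : CP ℓ n) : CP ℓ (n - fix σ) :=
  let eP := ((fixSet σ)ᶜ).orderIsoOfFin (card_nonfix σ)
  let eV := (((fixSet σ)ᶜ).image σ.1).orderIsoOfFin (card_vals σ)
  (eP.toEquiv.trans ((derMid σ).trans eV.toEquiv.symm), fun i => σ.2 (eP i))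

/-- `maf σ = maj (Der σ) + Σ_{j=1}^k (i_j − j)` over the (1-based) fixed points
`i_1 < ⋯ < i_k`; with 0-based fixed positions this is `Σ f − k(k−1)/2`. -/
def maf (σ : CP ℓ n) : ℕ := maj (Der σ) + ((∑ i ∈ fixSet σ, (i : ℕ)) - (fix σ).choose 2)

/-- flag maf. -/
def fmaf (σ : CP ℓ n) : ℕ := ℓ * maf σ + col σ

end CP

/-- The q-integer `[k]_q = 1 + q + ⋯ + q^{k-1}`. -/
def qint {R : Type*} [CommSemiring R] (q : R) (k : ℕ) : R := ∑ i ∈ range k, q ^ i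

/-! ### Gaussian binomial coefficients -/

section GaussBinom

variable {R : Type*} [CommSemiring R] (q : R)

/-- The Gaussian binomial coefficient `[m + k choose k]_q`. Indexing by the two parts `m` and `k`
instead of `m + k` and `k` keeps the `q`-Pascal rules free of truncated subtraction. -/
def gaussBinom : ℕ → ℕ → R
  | 0, _ => 1
  | _ + 1, 0 => 1
  | m + 1, k + 1 => gaussBinom m (k + 1) + q ^ (m + 1) * gaussBinom (m + 1) k

@[simp]
lemma gaussBinom_zero_left (k : ℕ) : gaussBinom q 0 k = 1 := by rw [gaussBinom]

@[simp]
lemma gaussBinom_zero_right (m : ℕ) : gaussBinom q m 0 = 1 := by cases m <;> rw [gaussBinom]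

lemma gaussBinom_succ_succ (m k : ℕ) :
    gaussBinom q (m + 1) (k + 1) =
      gaussBinom q m (k + 1) + q ^ (m + 1) * gaussBinom q (m + 1) k := by
  rw [gaussBinom]

lemma gaussBinom_succ_succ' : ∀ m k : ℕ,
    gaussBinom q (m + 1) (k + 1) =
      q ^ (k + 1) * gaussBinom q m (k + 1) + gaussBinom q (m + 1) k
  | 0, 0 => by simp [gaussBinom_succ_succ, add_comm]
  | 0, k + 1 => by
    calc
      gaussBinom q 1 (k + 2) = 1 + q * (q ^ (k + 1) + gaussBinom q 1 k) := by
        rw [gaussBinom_succ_succ, gaussBinom_succ_succ' 0 k]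
        simp
      _ = q ^ (k + 2) * 1 + (1 + q * gaussBinom q 1 k) := by ring
      _ = q ^ (k + 2) * gaussBinom q 0 (k + 2) + gaussBinom q 1 (k + 1) := by
        simp [gaussBinom_succ_succ q 0 k]
  | m + 1, 0 => by
    calc
      gaussBinom q (m + 2) 1 = q * gaussBinom q m 1 + 1 + q ^ (m + 2) := by
        rw [gaussBinom_succ_succ, gaussBinom_succ_succ' m 0]
        simp
      _ = q * (gaussBinom q m 1 + q ^ (m + 1)) + 1 := by ring
      _ = q ^ 1 * gaussBinom q (m + 1) 1 + gaussBinom q (m + 2) 0 := by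
        simp [gaussBinom_succ_succ q m 0]
  | m + 1, k + 1 => by
    calc
      gaussBinom q (m + 2) (k + 2)
        = gaussBinom q (m + 1) (k + 2) + q ^ (m + 2) * gaussBinom q (m + 2) (k + 1) :=
          gaussBinom_succ_succ q (m + 1) (k + 1)
      _ = q ^ (k + 2) * (gaussBinom q m (k + 2) + q ^ (m + 1) * gaussBinom q (m + 1) (k + 1)) +
            (gaussBinom q (m + 1) (k + 1) + q ^ (m + 2) * gaussBinom q (m + 2) k) := by
          rw [gaussBinom_succ_succ' m (k + 1), gaussBinom_succ_succ' (m + 1) k]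
          ring
      _ = q ^ (k + 2) * gaussBinom q (m + 1) (k + 2) + gaussBinom q (m + 2) (k + 1) := by
          rw [← gaussBinom_succ_succ, ← gaussBinom_succ_succ]

end GaussBinom

lemma sum_powersetCard_range_succ {M : Type*} [AddCommMonoid M] (N k : ℕ) (f : Finset ℕ → M) :
    ∑ S ∈ powersetCard (k + 1) (range (N + 1)), f S =
      ∑ S ∈ powersetCard (k + 1) (range N), f S +
        ∑ S ∈ powersetCard k (range N), f (insert N S) := by
  have notMem {j : ℕ} {S : Finset ℕ} (hS : S ∈ powersetCard j (range N)) : N ∉ S := fun h ↦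
    notMem_range_self ((mem_powersetCard.1 hS).1 h)
  rw [range_add_one, powersetCard_succ_insert notMem_range_self, sum_union, sum_image]
  · intro S hS T hT h
    rw [← erase_insert (notMem hS), ← erase_insert (notMem hT), h]
  · rw [disjoint_left]
    intro S hS hS'
    obtain ⟨T, -, rfl⟩ := mem_image.1 hS'
    exact notMem hS (mem_insert_self N T)

/-! ### Shuffles of a word with copies of one letter -/

section Shuffle

variable {α : Type*} {z : α} {w u v : ℕ → α} {S : Finset ℕ} {m k N p : ℕ}

lemma count_notMem_add_card (hS : S ⊆ range N) : Nat.count (· ∉ S) N + #S = N := by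
  rw [Nat.count_eq_card_filter_range, filter_notMem_eq_sdiff, card_sdiff_add_card_eq_card hS,
    card_range]

lemma count_notMem_of_mem_powersetCard (hS : S ∈ powersetCard k (range (m + k))) :
    Nat.count (· ∉ S) (m + k) = m := by
  obtain ⟨hS, hk⟩ := mem_powersetCard.1 hS
  have := count_notMem_add_card hS
  omega

lemma count_notMem_insert (h : p ≤ N) :
    Nat.count (· ∉ insert N S) p = Nat.count (· ∉ S) p := by
  simp only [Nat.count_eq_card_filter_range]
  refine congrArg card (filter_congr fun i hi ↦ ?_)
  have hiN : i ≠ N := ((mem_range.1 hi).trans_le h).ne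
  simp only [mem_insert, hiN, false_or]

/-- The word obtained from `w` by inserting the letter `z` so that it occupies the positions in
`S`. -/
def shuffle (z : α) (w : ℕ → α) (S : Finset ℕ) (p : ℕ) : α :=
  if p ∈ S then z else w (Nat.count (· ∉ S) p)

lemma shuffle_of_mem (h : p ∈ S) : shuffle z w S p = z := if_pos h

lemma shuffle_of_notMem (h : p ∉ S) : shuffle z w S p = w (Nat.count (· ∉ S) p) := if_neg h

lemma shuffle_empty : shuffle z w ∅ = w := by
  ext p
  simp [shuffle]

lemma shuffle_insert (h : p < N) : shuffle z w (insert N S) p = shuffle z w S p := by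
  rw [shuffle, shuffle, count_notMem_insert h.le]
  simp only [mem_insert, h.ne, false_or]

variable [LinearOrder α]

/-- The major index of the word `u 0 … u (N - 1)`. A descent from `u (i - 1)` to `u i` sits at the
1-based place `i`; the term `i = 0`, where `i - 1` is truncated, vanishes. -/
def wordMaj (u : ℕ → α) (N : ℕ) : ℕ := ∑ i ∈ range N, if u i < u (i - 1) then i else 0

/-- The major index of the word `u 0 … u (N - 1) x`. The final letter may be `⊤`, in which case it
has no effect. -/
def wordMajSnoc (u : ℕ → α) (N : ℕ) (x : WithTop α) : ℕ :=
  wordMaj u N + if x < u (N - 1) then N else 0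

lemma wordMaj_succ (u : ℕ → α) (N : ℕ) : wordMaj u (N + 1) = wordMajSnoc u N (u N) := by
  simp [wordMaj, wordMajSnoc, sum_range_succ]

lemma wordMajSnoc_top (u : ℕ → α) (N : ℕ) : wordMajSnoc u N ⊤ = wordMaj u N := by
  simp [wordMajSnoc]

lemma wordMaj_congr {β : Type*} [LinearOrder β] {v : ℕ → β}
    (h : ∀ i < N, ∀ j < N, u i < u j ↔ v i < v j) : wordMaj u N = wordMaj v N :=
  sum_congr rfl fun i hi ↦ by
    have hi := mem_range.1 hi
    simp only [h i hi (i - 1) (by omega)]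

lemma wordMajSnoc_congr (h : ∀ i < N, u i = v i) (x : WithTop α) :
    wordMajSnoc u N x = wordMajSnoc v N x := by
  rcases N with _ | N
  · simp [wordMajSnoc, wordMaj]
  · rw [wordMajSnoc, wordMajSnoc, Nat.add_sub_cancel, h N N.lt_succ_self,
      wordMaj_congr fun i hi j hj ↦ by rw [h i hi, h j hj]]

variable {R : Type*} [CommSemiring R] (q : R)

/-- Splits the shuffles by their last letter, which is either the last letter of `w` or `z`. -/
lemma sum_pow_wordMajSnoc_shuffle_succ (z : α) (w : ℕ → α) (m k : ℕ) (x : WithTop α) :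
    ∑ S ∈ powersetCard (k + 1) (range (m + 1 + (k + 1))),
        q ^ wordMajSnoc (shuffle z w S) (m + 1 + (k + 1)) x =
      (∑ S ∈ powersetCard (k + 1) (range (m + (k + 1))),
        q ^ wordMajSnoc (shuffle z w S) (m + (k + 1)) (w m)) *
          q ^ (if x < w m then m + k + 2 else 0) +
      (∑ S ∈ powersetCard k (range (m + 1 + k)),
        q ^ wordMajSnoc (shuffle z w S) (m + 1 + k) z) *
          q ^ (if x < z then m + k + 2 else 0) := by
  have hN : m + 1 + k = m + (k + 1) := by omega
  rw [← add_assoc (m + 1), hN, sum_powersetCard_range_succ, sum_mul, sum_mul]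
  congr 1 <;> refine sum_congr rfl fun S hS ↦ ?_
  · have hlast : shuffle z w S (m + (k + 1)) = w m := by
      rw [shuffle_of_notMem fun h ↦ notMem_range_self ((mem_powersetCard.1 hS).1 h),
        count_notMem_of_mem_powersetCard hS]
    rw [wordMajSnoc, wordMaj_succ, Nat.add_sub_cancel, hlast, pow_add]
    rfl
  · have hlast : shuffle z w (insert (m + (k + 1)) S) (m + (k + 1)) = z :=
      shuffle_of_mem (mem_insert_self _ _)
    rw [wordMajSnoc, wordMaj_succ, Nat.add_sub_cancel, hlast, pow_add,
      wordMajSnoc_congr fun p hp ↦ shuffle_insert hp]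
    rfl

lemma wordMajSnoc_shuffle_range (x : WithTop α) :
    wordMajSnoc (shuffle z w (range k)) k x = if x < z then k else 0 := by
  rw [wordMajSnoc_congr (v := fun _ ↦ z) fun i hi ↦ shuffle_of_mem (mem_range.2 hi)]
  simp [wordMajSnoc, wordMaj]

lemma gaussBinom_succ_succ_ite {a : α} (h : a ≠ z) (x : WithTop α) :
    q ^ (if a < z then k + 1 else 0) * gaussBinom q m (k + 1) *
          q ^ (if x < a then m + k + 2 else 0) +
        q ^ (if z < a then m + 1 else 0) * gaussBinom q (m + 1) k *
          q ^ (if x < z then m + k + 2 else 0) =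
      q ^ ((if x < a then m + 1 else 0) + if x < z then k + 1 else 0) *
        gaussBinom q (m + 1) (k + 1) := by
  rcases h.lt_or_gt with haz | hza
  · by_cases hxa : x < a
    · have hxz : x < z := hxa.trans (WithTop.coe_lt_coe.2 haz)
      simp only [haz, haz.not_gt, hxa, hxz, if_true, if_false, gaussBinom_succ_succ']
      ring
    · by_cases hxz : x < z
      · simp only [haz, haz.not_gt, hxa, hxz, if_true, if_false, gaussBinom_succ_succ]
        ring
      · simp only [haz, haz.not_gt, hxa, hxz, if_true, if_false, gaussBinom_succ_succ']
        ring
  · by_cases hxz : x < z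
    · have hxa : x < a := hxz.trans (WithTop.coe_lt_coe.2 hza)
      simp only [hza, hza.not_gt, hxa, hxz, if_true, if_false, gaussBinom_succ_succ]
      ring
    · by_cases hxa : x < a
      · simp only [hza, hza.not_gt, hxa, hxz, if_true, if_false, gaussBinom_succ_succ']
        ring
      · simp only [hza, hza.not_gt, hxa, hxz, if_true, if_false, gaussBinom_succ_succ]
        ring

/-- The final letter `x` makes the statement strong enough for an induction on the length. -/
lemma sum_pow_wordMajSnoc_shuffle : ∀ (m k : ℕ), (∀ i < m, w i ≠ z) → ∀ x : WithTop α,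
    ∑ S ∈ powersetCard k (range (m + k)), q ^ wordMajSnoc (shuffle z w S) (m + k) x =
      q ^ (wordMajSnoc w m x + if x < z then k else 0) * gaussBinom q m k
  | 0, k, _, x => by
    have hself : powersetCard k (range k) = {range k} := by simpa using powersetCard_self (range k)
    have hnil : wordMajSnoc w 0 x = 0 := by simp [wordMajSnoc, wordMaj]
    simp only [zero_add, hself, sum_singleton, wordMajSnoc_shuffle_range, hnil,
      gaussBinom_zero_left, mul_one]
  | m + 1, 0, _, x => by simp [shuffle_empty]
  | m + 1, k + 1, hw, x => by
    rw [sum_pow_wordMajSnoc_shuffle_succ,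
      sum_pow_wordMajSnoc_shuffle m (k + 1) (fun i hi ↦ hw i (by omega)),
      sum_pow_wordMajSnoc_shuffle (m + 1) k hw]
    have hwx : wordMajSnoc w (m + 1) x = wordMajSnoc w m (w m) + if x < w m then m + 1 else 0 := by
      rw [wordMajSnoc, wordMaj_succ, Nat.add_sub_cancel]
    have hwz : wordMajSnoc w (m + 1) z = wordMajSnoc w m (w m) + if z < w m then m + 1 else 0 := by
      simp [wordMajSnoc, wordMaj_succ]
    simp only [hwx, hwz, WithTop.coe_lt_coe, lt_irrefl, if_false, add_zero]
    simp only [add_assoc, pow_add q (wordMajSnoc w m (w m)), mul_assoc, ← mul_add]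
    congr 1
    simpa only [add_assoc, mul_assoc] using gaussBinom_succ_succ_ite q (hw m m.lt_succ_self) x

theorem sum_pow_wordMaj_shuffle (hw : ∀ i < m, w i ≠ z) (k : ℕ) :
    ∑ S ∈ powersetCard k (range (m + k)), q ^ wordMaj (shuffle z w S) (m + k) =
      q ^ wordMaj w m * gaussBinom q m k := by
  simpa [wordMajSnoc_top] using sum_pow_wordMajSnoc_shuffle q m k hw ⊤

end Shuffle

lemma sum_count_notMem_insert {S : Finset ℕ} {N : ℕ} (hS : S ⊆ range N) :
    ∑ i ∈ insert N S, Nat.count (· ∉ insert N S) i =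
      ∑ i ∈ S, Nat.count (· ∉ S) i + Nat.count (· ∉ S) N := by
  rw [sum_insert fun h ↦ notMem_range_self (hS h), count_notMem_insert le_rfl, add_comm]
  congr 1
  exact sum_congr rfl fun i hi ↦ count_notMem_insert (mem_range.1 (hS hi)).le

theorem sum_pow_sum_count_notMem {R : Type*} [CommSemiring R] (q : R) : ∀ m k : ℕ,
    ∑ S ∈ powersetCard k (range (m + k)), q ^ (∑ i ∈ S, Nat.count (· ∉ S) i) = gaussBinom q m k
  | 0, k => by
    have hself : powersetCard k (range k) = {range k} := by simpa using powersetCard_self (range k)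
    have hzero : ∑ i ∈ range k, Nat.count (· ∉ range k) i = 0 :=
      sum_eq_zero fun i hi ↦ by
        have hsub : range i ⊆ range k := range_subset_range.2 (mem_range.1 hi).le
        rw [Nat.count_eq_card_filter_range, filter_notMem_eq_sdiff,
          sdiff_eq_empty_iff_subset.2 hsub, card_empty]
    simp only [zero_add, hself, sum_singleton, hzero, pow_zero, gaussBinom_zero_left]
  | m + 1, 0 => by simp
  | m + 1, k + 1 => by
    have hN : m + (k + 1) = m + 1 + k := by omega
    rw [gaussBinom_succ_succ, ← sum_pow_sum_count_notMem q m (k + 1),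
      ← sum_pow_sum_count_notMem q (m + 1) k, ← add_assoc (m + 1), sum_powersetCard_range_succ,
      hN, mul_sum]
    congr 1
    refine sum_congr rfl fun S hS ↦ ?_
    rw [sum_count_notMem_insert (mem_powersetCard.1 hS).1, count_notMem_of_mem_powersetCard hS,
      pow_add, mul_comm]

lemma sum_count_notMem_add_choose_two (S : Finset ℕ) :
    ∑ i ∈ S, Nat.count (· ∉ S) i + (#S).choose 2 = ∑ i ∈ S, i := by
  induction S using Finset.induction_on_max with
  | empty => simp
  | insert N S hS ih =>
    have hSN : S ⊆ range N := fun i hi ↦ mem_range.2 (hS i hi)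
    have hN : N ∉ S := fun h ↦ lt_irrefl N (hS N h)
    have hcount := count_notMem_add_card hSN
    have hchoose : (#S + 1).choose 2 = #S + (#S).choose 2 := by
      rw [Nat.choose_succ_succ', Nat.choose_one_right]
    rw [sum_count_notMem_insert hSN, card_insert_of_notMem hN, sum_insert hN, hchoose]
    omega

lemma sum_comp_eq_of_sum_X_pow_eq {ι κ M : Type*} [AddCommMonoid M] {s : Finset ι} {t : Finset κ}
    {f : ι → ℕ} {g : κ → ℕ}
    (h : ∑ i ∈ s, (Polynomial.X : Polynomial ℕ) ^ f i = ∑ j ∈ t, Polynomial.X ^ g j) (F : ℕ → M) :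
    ∑ i ∈ s, F (f i) = ∑ j ∈ t, F (g j) := by
  have hmap : s.val.map f = t.val.map g := by
    ext a
    have hcoeff := congrArg (Polynomial.coeff · a) h
    simp only [Polynomial.finsetSum_coeff, Polynomial.coeff_X_pow, sum_boole] at hcoeff
    simp only [Multiset.count_map]
    exact_mod_cast hcoeff
  simpa [Multiset.map_map] using congrArg (fun c ↦ (c.map F).sum) hmap

/-! ### Inserting fixed points into a derangement -/

namespace CP

variable {ℓ m n k : ℕ}

section Gaps

/-- The positions that an increasing embedding `e` leaves free, as natural numbers. -/
def gaps (e : Fin m ↪o Fin n) : Finset ℕ := (univ.map e.toEmbedding)ᶜ.map Fin.valEmbedding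

lemma val_mem_gaps {e : Fin m ↪o Fin n} {i : Fin n} : (i : ℕ) ∈ gaps e ↔ i ∉ Set.range e := by
  simp [gaps, Fin.val_inj]

lemma card_gaps (e : Fin m ↪o Fin n) : #(gaps e) = n - m := by simp [gaps, card_compl]

lemma gaps_mem_powersetCard (e : Fin m ↪o Fin (m + k)) :
    gaps e ∈ powersetCard k (range (m + k)) := by
  refine mem_powersetCard.2 ⟨fun p hp ↦ ?_, by simp [card_gaps]⟩
  obtain ⟨i, -, rfl⟩ := mem_map.1 hp
  exact mem_range.2 i.isLt

lemma count_notMem_gaps (e : Fin m ↪o Fin n) (j : Fin m) : Nat.count (· ∉ gaps e) (e j) = j := by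
  have hfilter : {p ∈ range (e j) | p ∉ gaps e} =
      (Iio j).map (e.toEmbedding.trans Fin.valEmbedding) := by
    ext p
    simp only [mem_filter, mem_range, mem_map, mem_Iio, Function.Embedding.trans_apply,
      RelEmbedding.coe_toEmbedding, Fin.valEmbedding_apply]
    constructor
    · rintro ⟨hlt, hp⟩
      lift p to Fin n using hlt.trans (e j).isLt
      obtain ⟨i, rfl⟩ := not_not.1 (val_mem_gaps.not.1 hp)
      exact ⟨i, e.lt_iff_lt.1 hlt, rfl⟩
    · rintro ⟨i, hi, rfl⟩
      exact ⟨e.lt_iff_lt.2 hi, fun h ↦ val_mem_gaps.1 h ⟨i, rfl⟩⟩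
  rw [Nat.count_eq_card_filter_range, hfilter, card_map, Fin.card_Iio]

lemma gaps_injective : Function.Injective (gaps : (Fin m ↪o Fin n) → Finset ℕ) := fun e e' h ↦ by
  refine OrderEmbedding.range_inj.1 (Set.ext fun i ↦ ?_)
  rw [← not_iff_not, ← val_mem_gaps, ← val_mem_gaps, h]

lemma exists_gaps_eq {S : Finset ℕ} (hS : S ∈ powersetCard k (range (m + k))) :
    ∃ e : Fin m ↪o Fin (m + k), gaps e = S := by
  obtain ⟨hsub, hcard⟩ := mem_powersetCard.1 hS
  set T : Finset (Fin (m + k)) := S.attachFin fun i hi ↦ mem_range.1 (hsub hi) with hT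
  have hTcard : #Tᶜ = m := by simp [hT, card_compl, hcard]
  refine ⟨Tᶜ.orderEmbOfFin hTcard, ?_⟩
  rw [gaps, map_orderEmbOfFin_univ, compl_compl, hT, map_valEmbedding_attachFin]

lemma sum_gaps {M : Type*} [AddCommMonoid M] (f : Finset ℕ → M) :
    ∑ e : Fin m ↪o Fin (m + k), f (gaps e) = ∑ S ∈ powersetCard k (range (m + k)), f S :=
  sum_nbij gaps (fun e _ ↦ gaps_mem_powersetCard e) gaps_injective.injOn
    (fun _ hS ↦ (exists_gaps_eq hS).imp fun _ he ↦ ⟨mem_coe.2 (mem_univ _), he⟩) fun _ _ ↦ rfl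

end Gaps

lemma mem_fixSet {σ : CP ℓ n} {i : Fin n} : i ∈ fixSet σ ↔ σ.1 i = i ∧ (σ.2 i : ℕ) = 0 := by
  simp [fixSet]

section Inflate

variable [NeZero ℓ] {e e' : Fin m ↪o Fin n} {δ δ' : CP ℓ m} {i : Fin n}

/-- The colored permutation obtained from `δ` by inserting fixed points so that its letters move to
the positions in the range of `e`. -/
noncomputable def inflate (e : Fin m ↪o Fin n) (δ : CP ℓ m) : CP ℓ n :=
  (δ.1.viaFintypeEmbedding e.toEmbedding, Function.extend e δ.2 fun _ ↦ 0)

lemma inflate_perm_apply (e : Fin m ↪o Fin n) (δ : CP ℓ m) (j : Fin m) :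
    (inflate e δ).1 (e j) = e (δ.1 j) :=
  δ.1.viaFintypeEmbedding_apply_image e.toEmbedding j

lemma inflate_color_apply (e : Fin m ↪o Fin n) (δ : CP ℓ m) (j : Fin m) :
    (inflate e δ).2 (e j) = δ.2 j :=
  e.injective.extend_apply δ.2 (fun _ ↦ 0) j

lemma inflate_perm_of_notMem_range (h : i ∉ Set.range e) : (inflate e δ).1 i = i :=
  δ.1.viaFintypeEmbedding_apply_notMem_range e.toEmbedding h

lemma inflate_color_of_notMem_range (h : i ∉ Set.range e) : (inflate e δ).2 i = 0 :=
  Function.extend_apply' δ.2 (fun _ ↦ 0) i h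

lemma eq_inflate {σ : CP ℓ n} (hperm : ∀ j, σ.1 (e j) = e (δ.1 j))
    (hcolor : ∀ j, σ.2 (e j) = δ.2 j) (hfix : ∀ i ∉ Set.range e, i ∈ fixSet σ) :
    σ = inflate e δ := by
  refine Prod.ext (Equiv.ext fun i ↦ ?_) (funext fun i ↦ ?_) <;>
    by_cases hi : i ∈ Set.range e
  · obtain ⟨j, rfl⟩ := hi
    rw [hperm, inflate_perm_apply]
  · rw [(mem_fixSet.1 (hfix i hi)).1, inflate_perm_of_notMem_range hi]
  · obtain ⟨j, rfl⟩ := hi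
    rw [hcolor, inflate_color_apply]
  · rw [inflate_color_of_notMem_range hi]
    exact Fin.ext (mem_fixSet.1 (hfix i hi)).2

lemma inflate_injective (e : Fin m ↪o Fin n) :
    Function.Injective (inflate e : CP ℓ m → CP ℓ n) := fun δ δ' h ↦ by
  refine Prod.ext (Equiv.ext fun j ↦ e.injective ?_) (funext fun j ↦ ?_)
  · rw [← inflate_perm_apply, h, inflate_perm_apply]
  · rw [← inflate_color_apply e, h, inflate_color_apply]

lemma apply_mem_fixSet_inflate {j : Fin m} : e j ∈ fixSet (inflate e δ) ↔ j ∈ fixSet δ := by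
  simp [mem_fixSet, inflate_perm_apply, inflate_color_apply]

lemma mem_fixSet_inflate_of_notMem_range (h : i ∉ Set.range e) : i ∈ fixSet (inflate e δ) := by
  simp [mem_fixSet, inflate_perm_of_notMem_range h, inflate_color_of_notMem_range h]

lemma fixSet_inflate (hδ : fixSet δ = ∅) : fixSet (inflate e δ) = (univ.map e.toEmbedding)ᶜ := by
  ext i
  by_cases hi : i ∈ Set.range e
  · obtain ⟨j, rfl⟩ := hi
    simp [apply_mem_fixSet_inflate, hδ]
  · simpa [mem_fixSet_inflate_of_notMem_range hi] using hi

lemma map_val_fixSet_inflate (hδ : fixSet δ = ∅) :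
    (fixSet (inflate e δ)).map Fin.valEmbedding = gaps e := by
  rw [fixSet_inflate hδ, gaps]

lemma fix_inflate (hδ : fixSet δ = ∅) : fix (inflate e δ) = n - m := by
  rw [fix, ← card_map Fin.valEmbedding, map_val_fixSet_inflate hδ, card_gaps]

lemma sub_fix_inflate (hδ : fixSet δ = ∅) : n - fix (inflate e δ) = m := by
  have hmn : m ≤ n := by simpa using Fintype.card_le_of_embedding e.toEmbedding
  rw [fix_inflate hδ, Nat.sub_sub_self hmn]

lemma exc_inflate (e : Fin m ↪o Fin n) (δ : CP ℓ m) : exc (inflate e δ) = exc δ := by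
  rw [exc, exc, ← card_map e.toEmbedding]
  congr 1
  ext i
  by_cases hi : i ∈ Set.range e
  · obtain ⟨j, rfl⟩ := hi
    simp [inflate_perm_apply, inflate_color_apply]
  · have hi' : ∀ j, e j ≠ i := fun j hj ↦ hi ⟨j, hj⟩
    simp [inflate_perm_of_notMem_range hi, hi']

lemma col_inflate (e : Fin m ↪o Fin n) (δ : CP ℓ m) : col (inflate e δ) = col δ := by
  rw [col, col, ← sum_subset (subset_univ (univ.map e.toEmbedding)), sum_map]
  · simp [inflate_color_apply]
  · intro i _ hi
    rw [inflate_color_of_notMem_range (by simpa using hi), Fin.val_zero]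

lemma inflate_inj (hδ : fixSet δ = ∅) (hδ' : fixSet δ' = ∅) :
    inflate e δ = inflate e' δ' ↔ e = e' ∧ δ = δ' := by
  refine ⟨fun h ↦ ?_, fun ⟨he, hδδ'⟩ ↦ by rw [he, hδδ']⟩
  have he : e = e' := by
    apply gaps_injective
    rw [← map_val_fixSet_inflate hδ, h, map_val_fixSet_inflate hδ']
  subst he
  exact ⟨rfl, inflate_injective e h⟩

end Inflate

section Der

lemma image_compl_fixSet (σ : CP ℓ n) : (fixSet σ)ᶜ.image σ.1 = (fixSet σ)ᶜ := by
  refine eq_of_subset_of_card_le (image_subset_iff.2 fun i hi ↦ ?_) ?_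
  · rw [mem_compl] at hi ⊢
    intro h
    have hfix : σ.1 i = i := σ.1.injective (mem_fixSet.1 h).1
    exact hi (hfix ▸ h)
  · rw [card_image_of_injective _ σ.1.injective]

/-- The increasing embedding onto the positions that are not fixed. -/
def nonfixEmb (σ : CP ℓ n) : Fin (n - fix σ) ↪o Fin n := (fixSet σ)ᶜ.orderEmbOfFin (card_nonfix σ)

lemma mem_range_nonfixEmb {σ : CP ℓ n} {i : Fin n} :
    i ∈ Set.range (nonfixEmb σ) ↔ i ∉ fixSet σ := by
  simp [nonfixEmb]

lemma nonfixEmb_Der_perm_apply (σ : CP ℓ n) (j : Fin (n - fix σ)) :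
    nonfixEmb σ ((Der σ).1 j) = σ.1 (nonfixEmb σ j) := by
  have hrank : ∀ (T : Finset (Fin n)) (hT : #T = n - fix σ) (_ : T = (fixSet σ)ᶜ) (x : T),
      nonfixEmb σ ((T.orderIsoOfFin hT).symm x) = x := by
    rintro T hT rfl x
    simp [nonfixEmb, ← coe_orderIsoOfFin_apply]
  exact hrank _ (card_vals σ) (image_compl_fixSet σ) _

variable [NeZero ℓ]

lemma inflate_nonfixEmb_Der (σ : CP ℓ n) : inflate (nonfixEmb σ) (Der σ) = σ :=
  (eq_inflate (fun j ↦ (nonfixEmb_Der_perm_apply σ j).symm) (fun _ ↦ rfl)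
    fun _ hi ↦ not_not.1 (mem_range_nonfixEmb.not.1 hi)).symm

lemma fixSet_Der (σ : CP ℓ n) : fixSet (Der σ) = ∅ := by
  refine eq_empty_of_forall_notMem fun j hj ↦ ?_
  have hfix : nonfixEmb σ j ∈ fixSet σ := by
    rw [← apply_mem_fixSet_inflate (e := nonfixEmb σ), inflate_nonfixEmb_Der] at hj
    exact hj
  exact mem_range_nonfixEmb.1 ⟨j, rfl⟩ hfix

lemma maj_Der_inflate {δ : CP ℓ m} (hδ : fixSet δ = ∅) (e : Fin m ↪o Fin n) :
    maj (Der (inflate e δ)) = maj δ := by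
  obtain ⟨σ, hσ⟩ : ∃ σ, σ = inflate e δ := ⟨_, rfl⟩
  obtain rfl : m = n - fix σ := by rw [hσ, sub_fix_inflate hδ]
  rw [← hσ, ((inflate_inj (fixSet_Der σ) hδ).1 ((inflate_nonfixEmb_Der σ).trans hσ)).2]

lemma maf_inflate {δ : CP ℓ m} (hδ : fixSet δ = ∅) (e : Fin m ↪o Fin n) :
    maf (inflate e δ) = maj δ + ∑ i ∈ gaps e, Nat.count (· ∉ gaps e) i := by
  have hsum : ∑ i ∈ fixSet (inflate e δ), (i : ℕ) = ∑ i ∈ gaps e, i := by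
    simp [← map_val_fixSet_inflate hδ]
  have hmaf := sum_count_notMem_add_choose_two (gaps e)
  rw [card_gaps] at hmaf
  rw [maf, maj_Der_inflate hδ, hsum, fix_inflate hδ]
  omega

lemma sum_filter_eq_sum_inflate {M : Type*} [AddCommMonoid M] (m : ℕ) (f : CP ℓ n → M) :
    ∑ σ with n - fix σ = m, f σ =
      ∑ δ : CP ℓ m with fixSet δ = ∅, ∑ e : Fin m ↪o Fin n, f (inflate e δ) := by
  rw [← sum_product']
  symm
  refine sum_nbij (fun x ↦ inflate x.2 x.1) ?_ ?_ ?_ fun _ _ ↦ rfl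
  · intro x hx
    obtain ⟨hδ, -⟩ := mem_product.1 hx
    exact mem_filter.2 ⟨mem_univ _, sub_fix_inflate (mem_filter.1 hδ).2⟩
  · intro x hx y hy hxy
    obtain ⟨hδ, -⟩ := mem_product.1 hx
    obtain ⟨hδ', -⟩ := mem_product.1 hy
    obtain ⟨he, hδδ'⟩ := (inflate_inj (mem_filter.1 hδ).2 (mem_filter.1 hδ').2).1 hxy
    exact Prod.ext hδδ' he
  · intro σ hσ
    obtain rfl : n - fix σ = m := (mem_filter.1 hσ).2
    refine ⟨(Der σ, nonfixEmb σ), mem_product.2 ⟨?_, mem_univ _⟩, inflate_nonfixEmb_Der σ⟩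
    exact mem_filter.2 ⟨mem_univ _, fixSet_Der σ⟩

theorem sum_eq_sum_inflate {M : Type*} [AddCommMonoid M] (f : CP ℓ n → M) :
    ∑ σ, f σ = ∑ m ∈ range (n + 1), ∑ δ : CP ℓ m with fixSet δ = ∅, ∑ e : Fin m ↪o Fin n,
      f (inflate e δ) := by
  rw [← sum_fiberwise_of_maps_to (g := fun σ ↦ n - fix σ) (t := range (n + 1)) fun σ _ ↦
    mem_range.2 (Nat.lt_succ_of_le (Nat.sub_le _ _))]
  exact sum_congr rfl fun m _ ↦ sum_filter_eq_sum_inflate m f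

end Der

/-! ### Replacing the fixed points by one letter -/

section Word

lemma letter_val (σ : CP ℓ n) (i : Fin n) : letter σ i = ((σ.2 i : ℕ), (σ.1 i : ℕ)) := by
  simp [letter]

/-- The sign by which positions are sorted: positive at excedances, zero at fixed
points, negative elsewhere. -/
def zSign (σ : CP ℓ n) (i : Fin n) : SignType :=
  if i ∈ fixSet σ then 0 else if (σ.2 i : ℕ) = 0 ∧ i < σ.1 i then 1 else -1

/-- The ordered alphabet of `zWord`: a sign, then a color (smaller colors being larger), then an
absolute value. -/
abbrev ZLetter := SignType ×ₗ ℕᵒᵈ ×ₗ ℕ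

/-- The letter that stands for every fixed point. -/
def zFix : ZLetter := toLex (0, toLex (OrderDual.toDual 0, 0))

/-- The letter of `σ` at position `i`, lifted above `zFix` if it is an excedance and lowered below
`zFix` if it is neither an excedance nor a fixed point. -/
def zLetter (σ : CP ℓ n) (i : Fin n) : ZLetter :=
  if zSign σ i = 0 then zFix
  else toLex (zSign σ i, toLex (OrderDual.toDual (σ.2 i : ℕ), (σ.1 i : ℕ)))

/-- The word of `σ` in which every fixed point is replaced by `zFix`; it is continued by `zFix`
beyond its length. -/
def zWord (σ : CP ℓ n) (p : ℕ) : ZLetter := if h : p < n then zLetter σ ⟨p, h⟩ else zFix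

lemma zWord_val (σ : CP ℓ n) (i : Fin n) : zWord σ i = zLetter σ i := by simp [zWord]

lemma zSign_eq_zero_iff {σ : CP ℓ n} {i : Fin n} : zSign σ i = 0 ↔ i ∈ fixSet σ := by
  rw [zSign]
  split_ifs <;> simp_all

lemma zLetter_lt_iff {σ : CP ℓ n} {i j : Fin n} :
    zLetter σ i < zLetter σ j ↔ zSign σ i < zSign σ j ∨
      zSign σ i = zSign σ j ∧ zSign σ i ≠ 0 ∧ gtLetter (letter σ j) (letter σ i) := by
  rw [zLetter, zLetter, letter_val, letter_val, gtLetter, zFix]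
  split_ifs <;> simp_all [Prod.Lex.toLex_lt_toLex, eq_comm]

lemma zLetter_lt_zFix_iff {σ : CP ℓ n} {i : Fin n} : zLetter σ i < zFix ↔ zSign σ i < 0 := by
  rw [zLetter, zFix]
  split_ifs <;> simp_all [Prod.Lex.toLex_lt_toLex]

lemma zFix_lt_zLetter_iff {σ : CP ℓ n} {i : Fin n} : zFix < zLetter σ i ↔ 0 < zSign σ i := by
  rw [zLetter, zFix]
  split_ifs <;> simp_all [Prod.Lex.toLex_lt_toLex, eq_comm]

/-- No value lies between neighboring positions; hence raising the excedances and lowering the other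
letters changes no comparison of neighbors. -/
lemma zLetter_succ_lt_iff {σ : CP ℓ n} {i j : Fin n} (hij : (j : ℕ) = i + 1) :
    zLetter σ j < zLetter σ i ↔ gtLetter (letter σ i) (letter σ j) := by
  have hne : (σ.1 i : ℕ) ≠ σ.1 j := fun h ↦ by
    have := σ.1.injective (Fin.ext h)
    omega
  rw [zLetter_lt_iff, letter_val, letter_val, gtLetter]
  simp only [zSign, mem_fixSet, Fin.ext_iff, Fin.lt_def]
  split_ifs <;> simp only [lt_self_iff_false, SignType.pos_iff, SignType.neg_iff,
    SignType.not_lt_neg_one, SignType.neg_one_lt_one, SignType.self_eq_neg_iff,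
    SignType.neg_eq_zero_iff, one_ne_zero, ne_eq, not_true_eq_false,
    not_false_eq_true, true_and, false_and, or_false, false_or, true_iff, false_iff] <;> omega

theorem maj_eq_wordMaj_zWord (σ : CP ℓ n) : maj σ = wordMaj (zWord σ) n := by
  rcases n with _ | n
  · simp [maj, desSet, wordMaj]
  · rw [maj, desSet, sum_filter, wordMaj, sum_range_succ', Nat.add_sub_cancel, ite_self, add_zero]
    refine sum_congr rfl fun p hp ↦ ?_
    have hp := mem_range.1 hp
    have hdes := zLetter_succ_lt_iff (σ := σ) (i := ⟨p, by omega⟩) (j := ⟨p + 1, by omega⟩) rfl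
    simp only [← hdes, ← zWord_val, Nat.add_sub_cancel]

lemma zWord_ne_zFix {δ : CP ℓ m} (hδ : fixSet δ = ∅) : ∀ p < m, zWord δ p ≠ zFix := fun p hp h ↦ by
  have hsign : zSign δ ⟨p, hp⟩ ≠ 0 := by simp [zSign_eq_zero_iff, hδ]
  rw [zWord, dif_pos hp] at h
  rcases lt_or_gt_of_ne hsign with hlt | hgt
  · exact (zLetter_lt_zFix_iff.2 hlt).ne h
  · exact (zFix_lt_zLetter_iff.2 hgt).ne' h

lemma shuffle_zWord_apply (e : Fin m ↪o Fin n) (δ : CP ℓ m) (j : Fin m) :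
    shuffle zFix (zWord δ) (gaps e) (e j) = zLetter δ j := by
  rw [shuffle_of_notMem fun h ↦ val_mem_gaps.1 h ⟨j, rfl⟩, count_notMem_gaps, zWord_val]

variable [NeZero ℓ]

lemma zSign_inflate (e : Fin m ↪o Fin n) (δ : CP ℓ m) (j : Fin m) :
    zSign (inflate e δ) (e j) = zSign δ j := by
  simp only [zSign, apply_mem_fixSet_inflate, inflate_perm_apply, inflate_color_apply,
    e.lt_iff_lt]

lemma zLetter_inflate_lt_iff {e : Fin m ↪o Fin n} {δ : CP ℓ m} {i j : Fin m} :
    zLetter (inflate e δ) (e i) < zLetter (inflate e δ) (e j) ↔ zLetter δ i < zLetter δ j := by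
  simp only [zLetter_lt_iff, zSign_inflate, letter_val, gtLetter, inflate_perm_apply,
    inflate_color_apply, Fin.val_fin_lt, e.lt_iff_lt]

lemma zLetter_inflate_of_notMem_range {e : Fin m ↪o Fin n} {δ : CP ℓ m} {i : Fin n}
    (h : i ∉ Set.range e) : zLetter (inflate e δ) i = zFix :=
  if_pos (zSign_eq_zero_iff.2 (mem_fixSet_inflate_of_notMem_range h))

lemma zLetter_inflate_lt_iff_shuffle {e : Fin m ↪o Fin n} {δ : CP ℓ m} (a b : Fin n) :
    zLetter (inflate e δ) a < zLetter (inflate e δ) b ↔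
      shuffle zFix (zWord δ) (gaps e) a < shuffle zFix (zWord δ) (gaps e) b := by
  by_cases ha : a ∈ Set.range e <;> by_cases hb : b ∈ Set.range e
  · obtain ⟨i, rfl⟩ := ha
    obtain ⟨j, rfl⟩ := hb
    rw [shuffle_zWord_apply, shuffle_zWord_apply, zLetter_inflate_lt_iff]
  · obtain ⟨i, rfl⟩ := ha
    rw [shuffle_zWord_apply, shuffle_of_mem (val_mem_gaps.2 hb),
      zLetter_inflate_of_notMem_range hb, zLetter_lt_zFix_iff, zLetter_lt_zFix_iff, zSign_inflate]
  · obtain ⟨j, rfl⟩ := hb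
    rw [shuffle_zWord_apply, shuffle_of_mem (val_mem_gaps.2 ha),
      zLetter_inflate_of_notMem_range ha, zFix_lt_zLetter_iff, zFix_lt_zLetter_iff, zSign_inflate]
  · rw [shuffle_of_mem (val_mem_gaps.2 ha), shuffle_of_mem (val_mem_gaps.2 hb),
      zLetter_inflate_of_notMem_range ha, zLetter_inflate_of_notMem_range hb]

theorem maj_inflate (e : Fin m ↪o Fin n) (δ : CP ℓ m) :
    maj (inflate e δ) = wordMaj (shuffle zFix (zWord δ) (gaps e)) n := by
  rw [maj_eq_wordMaj_zWord]
  refine wordMaj_congr fun p hp q hq ↦ ?_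
  lift p to Fin n using hp
  lift q to Fin n using hq
  rw [zWord_val, zWord_val, zLetter_inflate_lt_iff_shuffle]

end Word

section Equidistribution

variable [NeZero ℓ] {R : Type*} [CommSemiring R] (q : R) {δ : CP ℓ m}

theorem sum_pow_maj_inflate (hδ : fixSet δ = ∅) (k : ℕ) :
    ∑ e : Fin m ↪o Fin (m + k), q ^ maj (inflate e δ) = q ^ maj δ * gaussBinom q m k := by
  simp only [maj_inflate]
  rw [sum_gaps fun S ↦ q ^ wordMaj (shuffle zFix (zWord δ) S) (m + k),
    sum_pow_wordMaj_shuffle q (zWord_ne_zFix hδ), maj_eq_wordMaj_zWord]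

theorem sum_pow_maf_inflate (hδ : fixSet δ = ∅) (k : ℕ) :
    ∑ e : Fin m ↪o Fin (m + k), q ^ maf (inflate e δ) = q ^ maj δ * gaussBinom q m k := by
  simp only [maf_inflate hδ, pow_add, ← mul_sum]
  rw [sum_gaps fun S ↦ q ^ ∑ i ∈ S, Nat.count (· ∉ S) i, sum_pow_sum_count_notMem]

lemma sum_maf_inflate_eq_sum_maj_inflate {M : Type*} [AddCommMonoid M] (hδ : fixSet δ = ∅)
    (F : ℕ → M) :
    ∑ e : Fin m ↪o Fin n, F (maf (inflate e δ)) = ∑ e : Fin m ↪o Fin n, F (maj (inflate e δ)) := by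
  rcases isEmpty_or_nonempty (Fin m ↪o Fin n) with _ | ⟨⟨e⟩⟩
  · simp
  · have hmn : m ≤ n := by simpa using Fintype.card_le_of_embedding e.toEmbedding
    obtain ⟨k, rfl⟩ := Nat.exists_eq_add_of_le hmn
    exact sum_comp_eq_of_sum_X_pow_eq
      ((sum_pow_maf_inflate _ hδ k).trans (sum_pow_maj_inflate _ hδ k).symm) F

theorem sum_maf_eq_sum_maj {M : Type*} [AddCommMonoid M] (F : ℕ → ℕ → ℕ → ℕ → M) :
    ∑ σ : CP ℓ n, F (maf σ) (col σ) (exc σ) (fix σ) =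
      ∑ σ : CP ℓ n, F (maj σ) (col σ) (exc σ) (fix σ) := by
  rw [sum_eq_sum_inflate, sum_eq_sum_inflate]
  refine sum_congr rfl fun m _ ↦ sum_congr rfl fun δ hδ ↦ ?_
  have hδ := (mem_filter.1 hδ).2
  simp only [col_inflate, exc_inflate, fix_inflate hδ]
  exact sum_maf_inflate_eq_sum_maj_inflate hδ fun s ↦ F s (col δ) (exc δ) (n - m)

end Equidistribution

end CP

/-- The triple statistics `(fmaf, exc, fix)` and `(fmaj, exc, fix)` are
equidistributed on `G_{ℓ,n}`. -/
theorem fmaf_exc_fix_equidistributed_with_fmaj_exc_fix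
    (ℓ n : ℕ) (hℓ : 1 ≤ ℓ) (a b c : ℕ) :
    ((univ : Finset (CP ℓ n)).filter fun σ =>
        CP.fmaf σ = a ∧ CP.exc σ = b ∧ CP.fix σ = c).card =
    ((univ : Finset (CP ℓ n)).filter fun σ =>
        CP.fmaj σ = a ∧ CP.exc σ = b ∧ CP.fix σ = c).card := by
  have : NeZero ℓ := ⟨by omega⟩
  simp only [card_filter]
  exact CP.sum_maf_eq_sum_maj fun s t x y ↦ if ℓ * s + t = a ∧ x = b ∧ y = c then 1 else 0
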